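/- Let A and B be C*-algebras, let I be a closed two-sided ideal of A and J a closed two-sided ideal of B, let π : A → A/I and ρ : B → B/J be the quotient maps, and let K be a closed two-sided ideal of A ⊗̂ B containing ker(π ⊗̂ ρ) = A ⊗̂ J + I ⊗̂ B. Then (π ⊗̂ ρ)(K) is a closed two-sided ideal of (A/I) ⊗̂ (B/J) and (π ⊗̂ ρ)⁻¹((π ⊗̂ ρ)(K)) = K. -/

import Mathlib

open scoped TensorProduct
open Pointwise

universe u

noncomputable section

/-- A C⋆-norm on a complex `*`-algebra.  On a matrix algebra over a C⋆-algebra such a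
norm is unique, namely the canonical C⋆-norm. -/
structure IsCStarNorm {M : Type*} [NonUnitalRing M] [StarRing M] [Module ℂ M]
    (N : M → ℝ) : Prop where
  add_le : ∀ x y, N (x + y) ≤ N x + N y
  smul_eq : ∀ (c : ℂ) (x : M), N (c • x) = ‖c‖ * N x
  eq_zero_of : ∀ x, N x = 0 → x = 0
  mul_le : ∀ x y, N (x * y) ≤ N x * N y
  star_mul_self : ∀ x, N (star x * x) = N x * N x

/-- The operator space projective tensor norm `‖·‖_∧` on the algebraic tensor product
`A ⊗ B`, relative to given families of matrix norms on `A` and `B`: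
`‖u‖_∧ = inf { ‖α‖ ‖v‖ ‖w‖ ‖β‖ : u = α (v ⊗ w) β }` where `v ∈ M_p(A)`, `w ∈ M_q(B)`,
`α ∈ M_{1,pq}(ℂ)` and `β ∈ M_{pq,1}(ℂ)` (row and column vectors carrying the Euclidean
norm, which is their norm as scalar matrices). -/
noncomputable def osProjNorm {A B : Type u}
    [AddCommGroup A] [Module ℂ A] [AddCommGroup B] [Module ℂ B]
    (NA : ∀ p : ℕ, Matrix (Fin p) (Fin p) A → ℝ)
    (NB : ∀ q : ℕ, Matrix (Fin q) (Fin q) B → ℝ) (u : A ⊗[ℂ] B) : ℝ :=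
  sInf { r : ℝ | ∃ (p q : ℕ) (α : Fin p × Fin q → ℂ) (v : Matrix (Fin p) (Fin p) A)
      (w : Matrix (Fin q) (Fin q) B) (β : Fin p × Fin q → ℂ),
      u = ∑ ik : Fin p × Fin q, ∑ jl : Fin p × Fin q,
            (α ik * β jl) • (v ik.1 jl.1 ⊗ₜ[ℂ] w ik.2 jl.2) ∧
      r = Real.sqrt (∑ ik, ‖α ik‖ ^ 2) * NA p v * NB q w *
            Real.sqrt (∑ jl, ‖β jl‖ ^ 2) }

/-- `X` is a completion of the algebraic tensor product `A ⊗ B` with respect to the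
norm `ν`, via the (necessarily isometric) dense embedding `ι`, and the multiplication and
involution of `X` are the canonical ones induced from `A` and `B`.  Applied with
`ν = osProjNorm NA NB` (for the canonical matrix C⋆-norms `NA`, `NB`) this characterizes
the Banach `*`-algebra `A ⊗̂ B` (the operator space projective tensor product) up to
isometric `*`-isomorphism; applied with `ν = bsProjNorm` it characterizes the Banach
space projective tensor product `A ⊗_γ B`. -/
structure IsTensorCompletion {A B : Type u} [NonUnitalRing A] [StarRing A] [Module ℂ A]
    [NonUnitalRing B] [StarRing B] [Module ℂ B] (ν : A ⊗[ℂ] B → ℝ)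
    (X : Type u) [NonUnitalNormedRing X] [StarRing X] [NormedSpace ℂ X] [CompleteSpace X]
    (ι : A ⊗[ℂ] B →ₗ[ℂ] X) : Prop where
  norm_eq : ∀ u, ‖ι u‖ = ν u
  dense : DenseRange ι
  mul_tmul : ∀ (a c : A) (b d : B),
    ι (a ⊗ₜ[ℂ] b) * ι (c ⊗ₜ[ℂ] d) = ι ((a * c) ⊗ₜ[ℂ] (b * d))
  star_tmul : ∀ (a : A) (b : B), star (ι (a ⊗ₜ[ℂ] b)) = ι (star a ⊗ₜ[ℂ] star b)

/-- The product ideal `S ⊗̂ T`: the closure in `X` (a completion of `A ⊗ B`) of the span of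
elementary tensors `a ⊗ b` with `a ∈ S`, `b ∈ T`. -/
def tensorIdeal {A B : Type u} [NonUnitalRing A] [StarRing A] [Module ℂ A]
    [NonUnitalRing B] [StarRing B] [Module ℂ B]
    {X : Type u} [NonUnitalNormedRing X] [StarRing X] [NormedSpace ℂ X] [CompleteSpace X]
    (ι : A ⊗[ℂ] B →ₗ[ℂ] X) (S : Set A) (T : Set B) : Set X :=
  closure (ι '' (Submodule.span ℂ (Set.image2 (fun a b => a ⊗ₜ[ℂ] b) S T)))

/-- A closed prime (two-sided) ideal of a Banach algebra: a proper closed two-sided ideal `K`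
such that whenever the product of two closed two-sided ideals is contained in `K`, one of them
is contained in `K`. -/
def IsClosedPrimeIdeal {Y : Type u} [NonUnitalNormedRing Y] (K : TwoSidedIdeal Y) : Prop :=
  IsClosed (K : Set Y) ∧ (K : Set Y) ≠ Set.univ ∧
    ∀ I J : TwoSidedIdeal Y, IsClosed (I : Set Y) → IsClosed (J : Set Y) →
      (∀ x ∈ I, ∀ y ∈ J, x * y ∈ K) → (I : Set Y) ⊆ (K : Set Y) ∨ (J : Set Y) ⊆ (K : Set Y)

/-- An irreducible continuous `*`-representation of a Banach `*`-algebra `Y` on a complex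
Hilbert space. -/
structure IrreducibleRepOn (Y : Type u)
    [NonUnitalNormedRing Y] [StarRing Y] [NormedSpace ℂ Y] where
  H : Type u
  [normH : NormedAddCommGroup H]
  [ipsH : InnerProductSpace ℂ H]
  [csH : CompleteSpace H]
  π : Y →⋆ₙₐ[ℂ] (H →L[ℂ] H)
  continuous : Continuous π
  nonzero : ∃ y, π y ≠ 0
  irreducible : ∀ S : Submodule ℂ H, IsClosed (S : Set H) →
    (∀ y : Y, ∀ v ∈ S, π y v ∈ S) → S = ⊥ ∨ S = ⊤

/-- A primitive ideal: the kernel of an irreducible `*`-representation. -/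
def IsPrimitiveIdeal {Y : Type u} [NonUnitalNormedRing Y] [StarRing Y] [NormedSpace ℂ Y]
    (K : TwoSidedIdeal Y) : Prop :=
  ∃ ρ : IrreducibleRepOn Y, ∀ y, y ∈ K ↔ ρ.π y = 0

/-- A subset `K` of a ring is modular (as an ideal) if there is a relative unit `e`
with `x * e - x ∈ K` and `e * x - x ∈ K` for every `x`. -/
def IsModularIdealSet {Y : Type u} [NonUnitalRing Y] (K : Set Y) : Prop :=
  ∃ e : Y, ∀ x : Y, x * e - x ∈ K ∧ e * x - x ∈ K

/-- A maximal modular (two-sided) ideal: a modular ideal which is proper and maximal among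
proper two-sided ideals. -/
def IsMaximalModularIdeal {Y : Type u} [NonUnitalRing Y] (K : TwoSidedIdeal Y) : Prop :=
  IsModularIdealSet (K : Set Y) ∧ (K : Set Y) ≠ Set.univ ∧
    ∀ L : TwoSidedIdeal Y, (K : Set Y) ⊆ (L : Set Y) →
      (L : Set Y) = (K : Set Y) ∨ (L : Set Y) = Set.univ

/-- The operator norm of a `p × p` matrix of bounded operators on a Hilbert space `H`,
viewed as an operator on the `ℓ²`-direct sum `H ⊕ ⋯ ⊕ H`. -/
noncomputable def opMatrixNorm {H : Type u} [NormedAddCommGroup H] [InnerProductSpace ℂ H]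
    {p : ℕ} (T : Matrix (Fin p) (Fin p) (H →L[ℂ] H)) : ℝ :=
  sSup { r : ℝ | ∃ x : Fin p → H, (∑ i, ‖x i‖ ^ 2) ≤ 1 ∧
      r = Real.sqrt (∑ i, ‖∑ j, (T i j) (x j)‖ ^ 2) }

/-- An operator algebra structure on a Banach algebra `Y`: a bicontinuous algebra
homomorphism of `Y` into the bounded operators on some Hilbert space. -/
structure OperatorAlgebraEmbedding (Y : Type u) [NonUnitalNormedRing Y] [NormedSpace ℂ Y] where
  H : Type u
  [normH : NormedAddCommGroup H]
  [ipsH : InnerProductSpace ℂ H]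
  [csH : CompleteSpace H]
  ρ : Y →ₙₐ[ℂ] (H →L[ℂ] H)
  c : ℝ
  C : ℝ
  c_pos : 0 < c
  lower : ∀ y, c * ‖y‖ ≤ ‖ρ y‖
  upper : ∀ y, ‖ρ y‖ ≤ C * ‖y‖

/-- The matrix norms on `Y` induced by an operator algebra embedding, giving `Y` its
operator space structure: the norm of `v ∈ M_p(Y)` is the operator norm of the matrix
of operators obtained by applying the embedding entrywise. -/
noncomputable def OperatorAlgebraEmbedding.matrixNorm {Y : Type u}
    [NonUnitalNormedRing Y] [NormedSpace ℂ Y] (e : OperatorAlgebraEmbedding Y)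
    (p : ℕ) (v : Matrix (Fin p) (Fin p) Y) : ℝ :=
  letI := e.normH; letI := e.ipsH
  opMatrixNorm (v.map e.ρ)

/-- The Banach space projective tensor norm `‖·‖_γ` on the algebraic tensor product. -/
noncomputable def bsProjNorm {A B : Type u} [NonUnitalNormedRing A] [NormedSpace ℂ A]
    [NonUnitalNormedRing B] [NormedSpace ℂ B] (u : A ⊗[ℂ] B) : ℝ :=
  sInf { r : ℝ | ∃ (n : ℕ) (a : Fin n → A) (b : Fin n → B),
      u = ∑ i, a i ⊗ₜ[ℂ] b i ∧ r = ∑ i, ‖a i‖ * ‖b i‖ }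

/-- A C⋆-algebra `A` is subhomogeneous if there is `n : ℕ` bounding the (finite)
dimensions of all its irreducible `*`-representations. -/
def IsSubhomogeneous (A : Type u) [NonUnitalCStarAlgebra A] : Prop :=
  ∃ n : ℕ, ∀ ρ : IrreducibleRepOn A,
    letI := ρ.normH
    letI := ρ.ipsH
    FiniteDimensional ℂ ρ.H ∧ Module.finrank ℂ ρ.H ≤ n

/-!
The norm of `A ⊗̂ B` is computed from factorizations `α (v ⊗ w) β`, so lifting the matrices `v'` and
`w'` in a factorization over `A/I` and `B/J` lifts the tensor itself. Truncation by functional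
calculus commutes with `*`-homomorphisms, so self-adjoint elements lift along quotient maps of
C⋆-algebras without increasing the norm, and arbitrary ones at the cost of a factor `2`. That factor
does not depend on the size of the matrices, and the norms on matrices are the canonical ones
because a C⋆-norm on a C⋆-algebra is unique, so elements of the dense subspace `A/I ⊗ B/J` lift
along `π ⊗̂ ρ` with uniform norm control. By completeness `π ⊗̂ ρ` is surjective, hence a quotient
map. An ideal `K` that contains the kernel is saturated, so its image is closed.
-/

open scoped ComplexStarModule CStarAlgebra

/-- The truncation of a self-adjoint element `a` of a C⋆-algebra to norm at most `c`: the
continuous functional calculus of the retraction `s ↦ max (-c) (min c s)` of `ℝ` onto `[-c, c]`.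
It has the junk value `0` if `a` is not self-adjoint or `c < 0`. -/
def truncation {M : Type*} [NonUnitalCStarAlgebra M] (c : ℝ) (a : M) : M :=
  cfcₙ (fun s : ℝ ↦ max (-c) (min c s)) a

section Truncation

variable {M M' : Type*} [NonUnitalCStarAlgebra M] [NonUnitalCStarAlgebra M'] {c : ℝ} {a : M}

lemma norm_truncation_le (hc : 0 ≤ c) : ‖truncation c a‖ ≤ c :=
  norm_cfcₙ_le fun s _ ↦ by
    rw [Real.norm_eq_abs, abs_le]
    exact ⟨le_max_left _ _, max_le (by linarith) (min_le_left _ _)⟩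

lemma truncation_eq_self (ha : IsSelfAdjoint a) (hac : ‖a‖ ≤ c) : truncation c a = a := by
  conv_rhs => rw [← cfcₙ_id' ℝ a]
  refine cfcₙ_congr fun s hs ↦ ?_
  have h_abs : |s| ≤ c := by
    have h_norm := norm_apply_le_norm_cfcₙ (fun s : ℝ ↦ s) a hs
    rw [cfcₙ_id' ℝ a] at h_norm
    exact h_norm.trans hac
  rw [abs_le] at h_abs
  simp [h_abs]

lemma map_truncation (φ : M →⋆ₙₐ[ℂ] M') (hc : 0 ≤ c) (ha : IsSelfAdjoint a) :
    φ (truncation c a) = truncation c (φ a) :=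
  φ.map_cfcₙ _ a (by fun_prop) (by simp [hc]) (map_continuous φ) ha (ha.map φ)

-- `s / max(|s|, c)²` is the inverse of `s` off `[-c, c]`, and `s - max(-c, min(c, s))` is
-- supported there.
lemma exists_mul_mul_sub_truncation (hc : 0 < c) (ha : IsSelfAdjoint a) :
    ∃ k : M, ‖k‖ ≤ c⁻¹ ∧ k * a * (a - truncation c a) = a - truncation c a := by
  let k : ℝ → ℝ := fun s ↦ s / max |s| c ^ 2
  let f : ℝ → ℝ := fun s ↦ s - max (-c) (min c s)
  have h_max (s : ℝ) : 0 < max |s| c := hc.trans_le (le_max_right _ _)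
  have hk : Continuous k := by fun_prop (disch := intro s; exact (pow_pos (h_max s) 2).ne')
  have hk₀ : k 0 = 0 := by simp [k]
  have hf₀ : f 0 = 0 := by simp [f, hc.le]
  have h_sub : a - truncation c a = cfcₙ f a := by
    rw [cfcₙ_sub _ _ a (by fun_prop) rfl (by fun_prop) (by simp [hc.le]), cfcₙ_id' ℝ a, truncation]
  have h_fix (s : ℝ) : k s * s * f s = f s := by
    obtain hs | hs := le_total |s| c
    · have hs' := abs_le.mp hs
      simp [f, hs']
    · have hs₀ : s ≠ 0 := abs_pos.mp (hc.trans_le hs)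
      simp only [k, max_eq_left hs, sq_abs]
      field_simp
  refine ⟨cfcₙ k a, norm_cfcₙ_le fun s _ ↦ ?_, ?_⟩
  · have h_sq : 0 < max |s| c ^ 2 := pow_pos (h_max s) 2
    rw [Real.norm_eq_abs, abs_div, abs_of_pos h_sq, div_le_iff₀ h_sq, ← div_eq_inv_mul,
      le_div_iff₀ hc, sq]
    exact mul_le_mul (le_max_left _ _) (le_max_right _ _) hc.le (h_max s).le
  · rw [h_sub]
    nth_rw 2 [← cfcₙ_id' ℝ a]
    rw [← cfcₙ_mul k _ a (by fun_prop) hk₀ (by fun_prop) rfl,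
      ← cfcₙ_mul _ f a (by fun_prop) (by simp) (by fun_prop) hf₀]
    simp only [h_fix]

end Truncation

namespace IsCStarNorm

section Basic

variable {M : Type*} [NonUnitalRing M] [StarRing M] [Module ℂ M] {N : M → ℝ}

lemma nonneg (hN : IsCStarNorm N) (x : M) : 0 ≤ N x := by
  have h_zero : N 0 = 0 := by simpa using hN.smul_eq 0 0
  have h_neg : N (-x) = N x := by simpa using hN.smul_eq (-1) x
  have h_add := hN.add_le x (-x)
  rw [add_neg_cancel, h_zero, h_neg] at h_add
  linarith

lemma eq_of_star_mul_self_eq (hN : IsCStarNorm N) {x y : M} (h : star x * x = star y * y) :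
    N x = N y := by
  rw [← mul_self_inj (hN.nonneg x) (hN.nonneg y), ← hN.star_mul_self, ← hN.star_mul_self, h]

lemma unitary_mul_eq [IsScalarTower ℂ M M] [SMulCommClass ℂ M M] [StarModule ℂ M]
    (hN : IsCStarNorm N) {u : Unitization ℂ M}
    (hu : u ∈ unitary (Unitization ℂ M)) {y z : M} (hz : (z : Unitization ℂ M) = u * y) :
    N z = N y := by
  refine hN.eq_of_star_mul_self_eq (Unitization.inr_injective (R := ℂ) ?_)
  simp only [Unitization.inr_mul, Unitization.inr_star, hz, star_mul]
  rw [mul_assoc, ← mul_assoc (star u), Unitary.star_mul_self_of_mem hu, one_mul]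

end Basic

variable {M : Type*} [NonUnitalCStarAlgebra M] {N : M → ℝ}

-- In the unitization `x = (u + u⋆) / 2` for the unitary `u = x + i√(1 - x²)`.
lemma mul_le_of_norm_le_one (hN : IsCStarNorm N) {x : M} (hx : IsSelfAdjoint x) (hx_norm : ‖x‖ ≤ 1)
    (y : M) : N (x * y) ≤ N y := by
  let _ := CStarAlgebra.spectralOrder (Unitization ℂ M)
  have _ := CStarAlgebra.spectralOrderedRing (Unitization ℂ M)
  let a : selfAdjoint (Unitization ℂ M) := ⟨x, hx.inr ℂ⟩
  have ha : ‖a‖ ≤ 1 := (Unitization.norm_inr (𝕜 := ℂ) x).trans_le hx_norm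
  let u := selfAdjoint.unitarySelfAddISMul a ha
  have hu : ((2 : ℂ) • x : M) = (u + star (u : Unitization ℂ M) : Unitization ℂ M) := by
    rw [selfAdjoint.star_coe_unitarySelfAddISMul, selfAdjoint.unitarySelfAddISMul_coe]
    simp [a, two_smul]
  have exists_mul (v : Unitization ℂ M) : ∃ z : M, (z : Unitization ℂ M) = v * y :=
    ⟨v.fst • y + v.snd * y, by ext <;> simp⟩
  obtain ⟨z₁, hz₁⟩ := exists_mul u
  obtain ⟨z₂, hz₂⟩ := exists_mul (star u)
  have h_sum : (2 : ℂ) • (x * y) = z₁ + z₂ := by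
    apply Unitization.inr_injective (R := ℂ)
    rw [← smul_mul_assoc, Unitization.inr_mul, hu, add_mul, Unitization.inr_add, hz₁, hz₂]
  have h_two : 2 * N (x * y) ≤ N y + N y := by
    calc 2 * N (x * y) = N (z₁ + z₂) := by rw [← h_sum, hN.smul_eq, Complex.norm_ofNat]
      _ ≤ N z₁ + N z₂ := hN.add_le _ _
      _ = N y + N y := by
        rw [hN.unitary_mul_eq u.2 hz₁, hN.unitary_mul_eq (Unitary.star_mem u.2) hz₂]
  linarith

lemma le_norm_of_isSelfAdjoint (hN : IsCStarNorm N) {x : M} (hx : IsSelfAdjoint x) :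
    N x ≤ ‖x‖ := by
  obtain rfl | hx₀ := eq_or_ne x 0
  · simpa using (hN.smul_eq 0 0).le
  have h_pos : 0 < ‖x‖ := norm_pos_iff.mpr hx₀
  have h_mul : ‖x‖⁻¹ * (N x * N x) ≤ N x := by
    have hx' : IsSelfAdjoint (((‖x‖⁻¹ : ℝ) : ℂ) • x) :=
      IsSelfAdjoint.smul (Complex.conj_ofReal _) hx
    simpa [smul_mul_assoc, hN.smul_eq, ← hN.star_mul_self, hx.star_eq] using
      hN.mul_le_of_norm_le_one hx' (by simp [norm_smul, h_pos.ne']) x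
  rw [inv_mul_le_iff₀ h_pos] at h_mul
  nlinarith [hN.nonneg x]

lemma le_norm (hN : IsCStarNorm N) (x : M) : N x ≤ ‖x‖ := by
  have h := hN.le_norm_of_isSelfAdjoint (.star_mul_self x)
  rw [hN.star_mul_self, CStarRing.norm_star_mul_self] at h
  exact (mul_self_le_mul_self_iff (hN.nonneg x) (norm_nonneg x)).mpr h

lemma norm_le_of_isSelfAdjoint (hN : IsCStarNorm N) {a : M} (ha : IsSelfAdjoint a) :
    ‖a‖ ≤ N a := by
  refine le_of_forall_gt_imp_ge_of_dense fun c hc ↦ ?_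
  have hc₀ : 0 < c := (hN.nonneg a).trans_lt hc
  obtain ⟨k, hk, h_fix⟩ := exists_mul_mul_sub_truncation hc₀ ha
  set y := a - truncation c a
  have h_le : N y ≤ c⁻¹ * N a * N y := by
    calc N y = N (k * a * y) := by rw [h_fix]
      _ ≤ N k * N a * N y :=
        (hN.mul_le _ _).trans (mul_le_mul_of_nonneg_right (hN.mul_le _ _) (hN.nonneg _))
      _ ≤ c⁻¹ * N a * N y := by
        gcongr
        exacts [hN.nonneg y, hN.nonneg a, (hN.le_norm k).trans hk]
  have h_lt : c⁻¹ * N a < 1 := by rwa [inv_mul_lt_one₀ hc₀]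
  have hy₀ : y = 0 := hN.eq_zero_of y (by nlinarith [hN.nonneg y])
  rw [sub_eq_zero.mp hy₀]
  exact norm_truncation_le hc₀.le

theorem eq_norm (hN : IsCStarNorm N) (x : M) : N x = ‖x‖ := by
  refine (hN.le_norm x).antisymm ?_
  have h := hN.norm_le_of_isSelfAdjoint (.star_mul_self x)
  rw [hN.star_mul_self, CStarRing.norm_star_mul_self] at h
  exact (mul_self_le_mul_self_iff (norm_nonneg x) (hN.nonneg x)).mpr h

end IsCStarNorm

section Lifting

variable {M M' : Type*} [NonUnitalCStarAlgebra M] [NonUnitalCStarAlgebra M'] {φ : M →⋆ₙₐ[ℂ] M'}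

lemma exists_map_eq_norm_le_of_isSelfAdjoint (hφ : Function.Surjective φ) {b : M'}
    (hb : IsSelfAdjoint b) : ∃ a, φ a = b ∧ ‖a‖ ≤ ‖b‖ := by
  obtain ⟨a, rfl⟩ := hφ b
  have h_re : φ (ℜ a : M) = φ a := by
    rw [← hb.coe_realPart, realPart_apply_coe, realPart_apply_coe,
      map_real_smul φ (map_continuous φ), map_add, map_star]
  refine ⟨truncation ‖φ a‖ (ℜ a : M), ?_, norm_truncation_le (norm_nonneg _)⟩
  rw [map_truncation φ (norm_nonneg _) (ℜ a).2, h_re, truncation_eq_self hb le_rfl]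

lemma exists_map_eq_norm_le_two_mul (hφ : Function.Surjective φ) (b : M') :
    ∃ a, φ a = b ∧ ‖a‖ ≤ 2 * ‖b‖ := by
  obtain ⟨x, hx, hx_norm⟩ := exists_map_eq_norm_le_of_isSelfAdjoint hφ (ℜ b).2
  obtain ⟨y, hy, hy_norm⟩ := exists_map_eq_norm_le_of_isSelfAdjoint hφ (ℑ b).2
  refine ⟨x + Complex.I • y, ?_, ?_⟩
  · rw [map_add, map_smul, hx, hy, realPart_add_I_smul_imaginaryPart]
  · calc ‖x + Complex.I • y‖ ≤ ‖x‖ + ‖y‖ := by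
          simpa [norm_smul] using norm_add_le x (Complex.I • y)
      _ ≤ ‖b‖ + ‖b‖ :=
        add_le_add (hx_norm.trans (realPart.norm_le b)) (hy_norm.trans (imaginaryPart.norm_le b))
      _ = 2 * ‖b‖ := (two_mul _).symm

end Lifting

lemma IsCStarNorm.exists_matrix_map_eq_le {A A' : Type*} [NonUnitalCStarAlgebra A]
    [NonUnitalCStarAlgebra A'] {n : Type*} [Fintype n]
    {N : Matrix n n A → ℝ} {N' : Matrix n n A' → ℝ}
    (hN : IsCStarNorm N) (hN' : IsCStarNorm N') {π : A →⋆ₙₐ[ℂ] A'} (hπ : Function.Surjective π)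
    (v' : Matrix n n A') : ∃ v : Matrix n n A, v.map π = v' ∧ N v ≤ 2 * N' v' := by
  -- The C⋆-norm of `CStarMatrix` is built from an order on the entries.
  let _ := CStarAlgebra.spectralOrder A
  have _ := CStarAlgebra.spectralOrderedRing A
  let _ := CStarAlgebra.spectralOrder A'
  have _ := CStarAlgebra.spectralOrderedRing A'
  have hN : IsCStarNorm (M := CStarMatrix n n A) N :=
    ⟨hN.add_le, hN.smul_eq, hN.eq_zero_of, hN.mul_le, hN.star_mul_self⟩
  have hN' : IsCStarNorm (M := CStarMatrix n n A') N' :=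
    ⟨hN'.add_le, hN'.smul_eq, hN'.eq_zero_of, hN'.mul_le, hN'.star_mul_self⟩
  have h_map : Function.Surjective (CStarMatrix.mapₙₐ (n := n) π) := hπ.comp_left.comp_left
  obtain ⟨v, hv, hv_norm⟩ := exists_map_eq_norm_le_two_mul h_map (CStarMatrix.ofMatrix v')
  refine ⟨CStarMatrix.ofMatrix.symm v, hv, ?_⟩
  rw [← hN.eq_norm, ← hN'.eq_norm] at hv_norm
  exact hv_norm

/-- The product `α (v ⊗ w) β` of a row `α`, the matrix `v ⊗ w` over `A ⊗ B` and a column `β`, all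
indexed by `m × n`; these are the representations over which `osProjNorm` takes its infimum. -/
def rowTensorCol {A B m n : Type*} [AddCommGroup A] [Module ℂ A] [AddCommGroup B] [Module ℂ B]
    [Fintype m] [Fintype n] (α : m × n → ℂ) (v : Matrix m m A) (w : Matrix n n B)
    (β : m × n → ℂ) : A ⊗[ℂ] B :=
  ∑ ik, ∑ jl, (α ik * β jl) • (v ik.1 jl.1 ⊗ₜ[ℂ] w ik.2 jl.2)

lemma map_rowTensorCol {A B A' B' m n : Type*} [AddCommGroup A] [Module ℂ A] [AddCommGroup B]
    [Module ℂ B] [AddCommGroup A'] [Module ℂ A'] [AddCommGroup B'] [Module ℂ B'] [Fintype m]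
    [Fintype n] (f : A →ₗ[ℂ] A') (g : B →ₗ[ℂ] B') (α : m × n → ℂ) (v : Matrix m m A)
    (w : Matrix n n B) (β : m × n → ℂ) :
    TensorProduct.map f g (rowTensorCol α v w β) = rowTensorCol α (v.map f) (w.map g) β := by
  simp [rowTensorCol]

section OsProjNorm

variable {A B A' B' : Type u} [AddCommGroup A] [Module ℂ A] [AddCommGroup B] [Module ℂ B]
  [AddCommGroup A'] [Module ℂ A'] [AddCommGroup B'] [Module ℂ B']
  {NA : ∀ p : ℕ, Matrix (Fin p) (Fin p) A → ℝ} {NB : ∀ q : ℕ, Matrix (Fin q) (Fin q) B → ℝ}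
  {NA' : ∀ p : ℕ, Matrix (Fin p) (Fin p) A' → ℝ} {NB' : ∀ q : ℕ, Matrix (Fin q) (Fin q) B' → ℝ}

lemma osProjNorm_rowTensorCol_le (hNA : ∀ p v, 0 ≤ NA p v) (hNB : ∀ q w, 0 ≤ NB q w) {p q : ℕ}
    (α : Fin p × Fin q → ℂ) (v : Matrix (Fin p) (Fin p) A) (w : Matrix (Fin q) (Fin q) B)
    (β : Fin p × Fin q → ℂ) :
    osProjNorm NA NB (rowTensorCol α v w β) ≤
      √(∑ ik, ‖α ik‖ ^ 2) * NA p v * NB q w * √(∑ jl, ‖β jl‖ ^ 2) := by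
  refine csInf_le ⟨0, ?_⟩ ⟨p, q, α, v, w, β, rfl, rfl⟩
  rintro _ ⟨p, q, α, v, w, β, -, rfl⟩
  have := hNA p v
  have := hNB q w
  positivity

-- `osProjNorm NA NB u ≠ 0` rules out the junk value `sInf ∅ = 0`.
lemma exists_rowTensorCol_eq_lt {u : A ⊗[ℂ] B} {r : ℝ} (hu : osProjNorm NA NB u ≠ 0)
    (hr : osProjNorm NA NB u < r) :
    ∃ (p q : ℕ) (α : Fin p × Fin q → ℂ) (v : Matrix (Fin p) (Fin p) A)
      (w : Matrix (Fin q) (Fin q) B) (β : Fin p × Fin q → ℂ), rowTensorCol α v w β = u ∧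
        √(∑ ik, ‖α ik‖ ^ 2) * NA p v * NB q w * √(∑ jl, ‖β jl‖ ^ 2) < r := by
  obtain ⟨_, ⟨p, q, α, v, w, β, rfl, rfl⟩, h_lt⟩ := exists_lt_of_csInf_lt
    (Set.nonempty_iff_ne_empty.mpr fun h ↦ hu (by rw [osProjNorm, h, Real.sInf_empty])) hr
  exact ⟨p, q, α, v, w, β, rfl, h_lt⟩

lemma exists_map_eq_osProjNorm_le {f : A →ₗ[ℂ] A'} {g : B →ₗ[ℂ] B'} {C D : ℝ}
    (hC : 0 ≤ C) (hD : 0 ≤ D) (hNA : ∀ p v, 0 ≤ NA p v) (hNB : ∀ q w, 0 ≤ NB q w)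
    (hNA' : ∀ p v, 0 ≤ NA' p v)
    (hf : ∀ p v', ∃ v, v.map f = v' ∧ NA p v ≤ C * NA' p v')
    (hg : ∀ q w', ∃ w, w.map g = w' ∧ NB q w ≤ D * NB' q w')
    {u' : A' ⊗[ℂ] B'} {r : ℝ} (hu' : osProjNorm NA' NB' u' ≠ 0) (hr : osProjNorm NA' NB' u' < r) :
    ∃ u, TensorProduct.map f g u = u' ∧ osProjNorm NA NB u ≤ C * D * r := by
  obtain ⟨p, q, α, v', w', β, rfl, h_lt⟩ := exists_rowTensorCol_eq_lt hu' hr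
  obtain ⟨v, rfl, hv⟩ := hf p v'
  obtain ⟨w, rfl, hw⟩ := hg q w'
  refine ⟨rowTensorCol α v w β, map_rowTensorCol f g α v w β, ?_⟩
  have := hNB q w
  have := hNA' p (v.map f)
  calc osProjNorm NA NB (rowTensorCol α v w β)
      ≤ √(∑ ik, ‖α ik‖ ^ 2) * NA p v * NB q w * √(∑ jl, ‖β jl‖ ^ 2) :=
        osProjNorm_rowTensorCol_le hNA hNB α v w β
    _ ≤ √(∑ ik, ‖α ik‖ ^ 2) * (C * NA' p (v.map f)) * (D * NB' q (w.map g)) *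
          √(∑ jl, ‖β jl‖ ^ 2) := by gcongr
    _ = C * D * (√(∑ ik, ‖α ik‖ ^ 2) * NA' p (v.map f) * NB' q (w.map g) *
          √(∑ jl, ‖β jl‖ ^ 2)) := by ring
    _ ≤ C * D * r := by gcongr

end OsProjNorm

lemma surjective_of_denseRange_of_norm_le {𝕜 E F S : Type*} [NontriviallyNormedField 𝕜]
    [NormedAddCommGroup E] [NormedSpace 𝕜 E] [CompleteSpace E] [NormedAddCommGroup F]
    [NormedSpace 𝕜 F] [AddGroup S] {θ : E →L[𝕜] F} {j : S →+ F} (hj : DenseRange j) {C : ℝ}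
    (hC : 0 < C) (h_lift : ∀ s, ∃ x, θ x = j s ∧ ‖x‖ ≤ C * ‖j s‖) : Function.Surjective θ := by
  let f : NormedAddGroupHom E F := ⟨θ, map_add θ, ‖θ‖, θ.le_opNorm⟩
  have hf : f.SurjectiveOnWith j.range C := by
    rintro _ ⟨s, rfl⟩
    exact h_lift s
  intro y
  obtain ⟨x, hx, -⟩ := controlled_closure_of_complete hC one_pos hf y (hj y)
  exact ⟨x, hx⟩

namespace IsTensorCompletion

variable {A B A' B' X X' : Type u}
  [NonUnitalRing A] [StarRing A] [Module ℂ A] [NonUnitalRing B] [StarRing B] [Module ℂ B]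
  [NonUnitalRing A'] [StarRing A'] [Module ℂ A'] [NonUnitalRing B'] [StarRing B'] [Module ℂ B']
  [NonUnitalNormedRing X] [StarRing X] [NormedSpace ℂ X] [CompleteSpace X]
  [NonUnitalNormedRing X'] [StarRing X'] [NormedSpace ℂ X'] [CompleteSpace X']
  {ν : A ⊗[ℂ] B → ℝ} {ν' : A' ⊗[ℂ] B' → ℝ} {ι : A ⊗[ℂ] B →ₗ[ℂ] X} {ι' : A' ⊗[ℂ] B' →ₗ[ℂ] X'}
  {θ : X →L[ℂ] X'}

protected lemma map_mul {F G : Type*} [FunLike F A A'] [MulHomClass F A A'] [FunLike G B B']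
    [MulHomClass G B B'] {π : F} {ρ : G} (hX : IsTensorCompletion ν X ι)
    (hX' : IsTensorCompletion ν' X' ι')
    (hθ : ∀ a b, θ (ι (a ⊗ₜ[ℂ] b)) = ι' (π a ⊗ₜ[ℂ] ρ b)) (x y : X) :
    θ (x * y) = θ x * θ y := by
  refine hX.dense.induction_on₂ (isClosed_eq (by fun_prop) (by fun_prop)) (fun s t ↦ ?_) x y
  induction s using TensorProduct.induction_on with
  | zero => simp
  | add s₁ s₂ h₁ h₂ => simp only [map_add, add_mul, h₁, h₂]
  | tmul a b =>
    induction t using TensorProduct.induction_on with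
    | zero => simp
    | add t₁ t₂ h₁ h₂ => simp only [map_add, mul_add, h₁, h₂]
    | tmul c d => simp only [hX.mul_tmul, hθ, hX'.mul_tmul, map_mul]

end IsTensorCompletion

theorem IsTensorCompletion.surjective_of_surjective {A B A' B' X X' : Type u}
    [NonUnitalCStarAlgebra A] [NonUnitalCStarAlgebra B]
    [NonUnitalCStarAlgebra A'] [NonUnitalCStarAlgebra B']
    [NonUnitalNormedRing X] [StarRing X] [NormedSpace ℂ X] [CompleteSpace X]
    [NonUnitalNormedRing X'] [StarRing X'] [NormedSpace ℂ X'] [CompleteSpace X']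
    {NA : ∀ p : ℕ, Matrix (Fin p) (Fin p) A → ℝ} {NB : ∀ q : ℕ, Matrix (Fin q) (Fin q) B → ℝ}
    {NA' : ∀ p : ℕ, Matrix (Fin p) (Fin p) A' → ℝ} {NB' : ∀ q : ℕ, Matrix (Fin q) (Fin q) B' → ℝ}
    (hNA : ∀ p, IsCStarNorm (NA p)) (hNB : ∀ q, IsCStarNorm (NB q))
    (hNA' : ∀ p, IsCStarNorm (NA' p)) (hNB' : ∀ q, IsCStarNorm (NB' q))
    {ι : A ⊗[ℂ] B →ₗ[ℂ] X} (hX : IsTensorCompletion (osProjNorm NA NB) X ι)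
    {ι' : A' ⊗[ℂ] B' →ₗ[ℂ] X'} (hX' : IsTensorCompletion (osProjNorm NA' NB') X' ι')
    {π : A →⋆ₙₐ[ℂ] A'} {ρ : B →⋆ₙₐ[ℂ] B'}
    (hπ : Function.Surjective π) (hρ : Function.Surjective ρ) {θ : X →L[ℂ] X'}
    (hθ : ∀ a b, θ (ι (a ⊗ₜ[ℂ] b)) = ι' (π a ⊗ₜ[ℂ] ρ b)) : Function.Surjective θ := by
  have h_comp (u : A ⊗[ℂ] B) :
      θ (ι u) = ι' (TensorProduct.map (π : A →ₗ[ℂ] A') (ρ : B →ₗ[ℂ] B') u) :=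
    LinearMap.congr_fun (f := θ.toLinearMap ∘ₗ ι) (g := ι' ∘ₗ TensorProduct.map π ρ)
      (TensorProduct.ext' hθ) u
  refine surjective_of_denseRange_of_norm_le (C := 2 * 2 * 2) (j := ι'.toAddMonoidHom)
    hX'.dense (by norm_num) fun u' ↦ ?_
  change ∃ x, θ x = ι' u' ∧ ‖x‖ ≤ 2 * 2 * 2 * ‖ι' u'‖
  obtain h_zero | h_ne := eq_or_ne (ι' u') 0
  · exact ⟨0, by simp [h_zero]⟩
  have h_lt : osProjNorm NA' NB' u' < 2 * ‖ι' u'‖ := by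
    rw [← hX'.norm_eq]
    linarith [norm_pos_iff.mpr h_ne]
  obtain ⟨u, rfl, hu⟩ := exists_map_eq_osProjNorm_le (f := (π : A →ₗ[ℂ] A'))
    (g := (ρ : B →ₗ[ℂ] B')) zero_le_two zero_le_two (fun p ↦ (hNA p).nonneg)
    (fun q ↦ (hNB q).nonneg) (fun p ↦ (hNA' p).nonneg)
    (fun p ↦ (hNA p).exists_matrix_map_eq_le (hNA' p) hπ)
    (fun q ↦ (hNB q).exists_matrix_map_eq_le (hNB' q) hρ)
    (by rwa [← hX'.norm_eq, norm_ne_zero_iff]) h_lt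
  exact ⟨ι u, h_comp u, by rw [hX.norm_eq]; linarith⟩

lemma exists_twoSidedIdeal_coe_eq_image {R S F : Type*} [NonUnitalNonAssocRing R]
    [NonUnitalNonAssocRing S] [FunLike F R S] [NonUnitalRingHomClass F R S] {f : F}
    (hf : Function.Surjective f) (K : TwoSidedIdeal R) :
    ∃ L : TwoSidedIdeal S, (L : Set S) = f '' (K : Set R) := by
  let H : AddSubgroup S := (AddSubgroup.ofClass K).map f
  refine ⟨.mk' (f '' (K : Set R)) H.zero_mem H.add_mem H.neg_mem ?_ ?_, TwoSidedIdeal.coe_mk' ..⟩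
  · rintro x' _ ⟨y, hy, rfl⟩
    obtain ⟨x, rfl⟩ := hf x'
    exact ⟨x * y, K.mul_mem_left _ _ hy, map_mul f x y⟩
  · rintro _ y' ⟨x, hx, rfl⟩
    obtain ⟨y, rfl⟩ := hf y'
    exact ⟨x * y, K.mul_mem_right _ _ hx, map_mul f x y⟩

/-- In the setting of quotient maps `π : A → A/I`, `ρ : B → B/J` (realized
by surjective `*`-homomorphisms onto `A'`, `B'`) and the induced map
`θ = π ⊗̂ ρ : A ⊗̂ B → (A/I) ⊗̂ (B/J)`: for every closed two-sided ideal `K` of `A ⊗̂ B`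
containing `ker θ`, the image `θ(K)` is a closed two-sided ideal of `(A/I) ⊗̂ (B/J)`
and `θ⁻¹(θ(K)) = K`. -/
theorem image_of_ideal_under_quotient_tensor_map {A B A' B' X X' : Type u}
    [NonUnitalCStarAlgebra A] [NonUnitalCStarAlgebra B]
    [NonUnitalCStarAlgebra A'] [NonUnitalCStarAlgebra B']
    [NonUnitalNormedRing X] [StarRing X] [NormedSpace ℂ X] [CompleteSpace X]
    [NonUnitalNormedRing X'] [StarRing X'] [NormedSpace ℂ X'] [CompleteSpace X']
    (NA : ∀ p : ℕ, Matrix (Fin p) (Fin p) A → ℝ)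
    (NB : ∀ q : ℕ, Matrix (Fin q) (Fin q) B → ℝ)
    (NA' : ∀ p : ℕ, Matrix (Fin p) (Fin p) A' → ℝ)
    (NB' : ∀ q : ℕ, Matrix (Fin q) (Fin q) B' → ℝ)
    (hNA : ∀ p, IsCStarNorm (NA p)) (hNB : ∀ q, IsCStarNorm (NB q))
    (hNA' : ∀ p, IsCStarNorm (NA' p)) (hNB' : ∀ q, IsCStarNorm (NB' q))
    (ι : A ⊗[ℂ] B →ₗ[ℂ] X) (hX : IsTensorCompletion (osProjNorm NA NB) X ι)
    (ι' : A' ⊗[ℂ] B' →ₗ[ℂ] X') (hX' : IsTensorCompletion (osProjNorm NA' NB') X' ι')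
    (I : TwoSidedIdeal A) (J : TwoSidedIdeal B)
    (hI : IsClosed (I : Set A)) (hJ : IsClosed (J : Set B))
    (π : A →⋆ₙₐ[ℂ] A') (ρ : B →⋆ₙₐ[ℂ] B')
    (hπ : Function.Surjective π) (hρ : Function.Surjective ρ)
    (hkerπ : ∀ a, π a = 0 ↔ a ∈ I) (hkerρ : ∀ b, ρ b = 0 ↔ b ∈ J)
    (θ : X →L[ℂ] X')
    (hθ : ∀ (a : A) (b : B), θ (ι (a ⊗ₜ[ℂ] b)) = ι' (π a ⊗ₜ[ℂ] ρ b))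
    (K : TwoSidedIdeal X) (hK : IsClosed (K : Set X))
    (hker : ∀ x : X, θ x = 0 → x ∈ K) :
    (∃ L : TwoSidedIdeal X', (L : Set X') = θ '' (K : Set X)) ∧
    IsClosed (θ '' (K : Set X)) ∧
    θ ⁻¹' (θ '' (K : Set X)) = (K : Set X) := by
  have h_surj : Function.Surjective θ :=
    hX.surjective_of_surjective hNA hNB hNA' hNB' hX' hπ hρ hθ
  let θ' : X →ₙ+* X' :=
    { θ with map_mul' := hX.map_mul hX' hθ, map_zero' := map_zero θ, map_add' := map_add θ }
  have h_saturated : θ ⁻¹' (θ '' (K : Set X)) = (K : Set X) :=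
    congrArg SetLike.coe
      (AddSubgroup.comap_map_eq_self (f := (θ : X →+ X')) (H := .ofClass K) hker)
  have h_closed : IsClosed (θ '' (K : Set X)) := by
    rwa [← (θ.isQuotientMap h_surj).isClosed_preimage, h_saturated]
  exact ⟨exists_twoSidedIdeal_coe_eq_image (f := θ') h_surj K, h_closed, h_saturated⟩

end
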